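/- arXiv:2501.17712 — 2 statements merged into one kernel-verified Lean document; each statement's English description precedes it below -/
import Mathlib

section
/- Assume J ≥ J_0. There exists ℓ_0 ∈ ℕ such that dim_H( ∩_{ℓ≥ℓ_0} T̃_∞((1+b)^ℓ J, b, ε) ∩ I ) ≥ H − ε, where dim_H denotes Hausdorff dimension. -/
open scoped Classical ENNReal
open Set Filter MeasureTheory ProbabilityTheory

noncomputable section

/-- The dyadic interval `λ_{j,k} = [k 2^{-j}, (k+1) 2^{-j}]`. -/
def dyadic (j k : ℕ) : Set ℝ := Set.Icc ((k : ℝ) / 2 ^ j) (((k : ℝ) + 1) / 2 ^ j)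

/-- Indices `k` of dyadic intervals of scale `j` that intersect `I`
(the collection `I_j`). -/
def dyadicHit (I : Set ℝ) (j : ℕ) : Finset ℕ :=
  (Finset.range (2 ^ j)).filter fun k => (dyadic j k ∩ I).Nonempty

/-- Smallest number of intervals of length `ε` needed to cover `I`. -/
def coverNum (I : Set ℝ) (ε : ℝ) : ℕ :=
  sInf {n : ℕ | ∃ f : Fin n → ℝ, I ⊆ ⋃ i, Set.Icc (f i) (f i + ε)}

/-- Upper box-counting dimension of `I`:
`limsup_{ε → 0⁺} log N(ε) / (- log ε)`. -/
def upperBoxDim (I : Set ℝ) : ℝ :=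
  Filter.limsup (fun ε : ℝ => Real.log (coverNum I ε) / (-Real.log ε))
    (nhdsWithin 0 (Set.Ioi 0))

/-- The scale `⌊(1+β) j⌋` of the children of a dyadic interval of scale `j`. -/
def childScale (β : ℝ) (j : ℕ) : ℕ := ⌊(1 + β) * (j : ℝ)⌋₊

/-- Indices `k'` of dyadic intervals of scale `j'` belonging to `I_{j'}` and contained in
the dyadic interval of index `k` at scale `j`. -/
def childrenIn (I : Set ℝ) (j j' k : ℕ) : Finset ℕ :=
  (dyadicHit I j').filter fun k' => dyadic j' k' ⊆ dyadic j k

/-- The collection `SD(j,β,ε)` of intervals of `I_j` with slow duplication rate. -/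
def SD (I : Set ℝ) (H β ε : ℝ) (j : ℕ) : Finset ℕ :=
  (dyadicHit I j).filter fun k =>
    ((childrenIn I j (childScale β j) k).card : ℝ) ≤
      (2 : ℝ) ^ ((j : ℝ) * (β * H - 4 * (max 1 β) * ε))

/-- The collection `ND(j,β,ε)` of intervals of `I_j` with normal duplication rate. -/
def ND (I : Set ℝ) (H β ε : ℝ) (j : ℕ) : Finset ℕ :=
  (dyadicHit I j).filter fun k =>
    (2 : ℝ) ^ ((j : ℝ) * (β * H - 4 * (max 1 β) * ε)) ≤
        ((childrenIn I j (childScale β j) k).card : ℝ) ∧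
    ((childrenIn I j (childScale β j) k).card : ℝ) ≤
        (2 : ℝ) ^ ((j : ℝ) * (β * H + 4 * (max 1 β) * ε))

/-- The collection `FD(j,β,ε)` of intervals of `I_j` with fast duplication rate. -/
def FD (I : Set ℝ) (H β ε : ℝ) (j : ℕ) : Finset ℕ :=
  (dyadicHit I j).filter fun k =>
    (2 : ℝ) ^ ((j : ℝ) * (β * H + 4 * (max 1 β) * ε)) ≤
      ((childrenIn I j (childScale β j) k).card : ℝ)

/-- `C_β U`: the collection of all children (at scale `⌊(1+β)J⌋`, in `I_{⌊(1+β)J⌋}`)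
of the intervals of a collection `U` at scale `J`. -/
def CB (I : Set ℝ) (β : ℝ) (J : ℕ) (U : Finset ℕ) : Finset ℕ :=
  (dyadicHit I (childScale β J)).filter fun k' =>
    ∃ k ∈ U, dyadic (childScale β J) k' ⊆ dyadic J k

/-- The nested collections `T_ℓ(J,b,ε)`: `Tset I H b ε 0 J` is `T_1(J,b,ε) = ND(J,b,ε)` and
`Tset I H b ε n J` is `T_{n+1}(J,b,ε)`, defined recursively by keeping the intervals having
at least `2^{J(bH-5ε)}` children in `T_n((1+b)J,b,ε)`. -/
def Tset (I : Set ℝ) (H b ε : ℝ) : ℕ → ℕ → Finset ℕ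
  | 0, J => ND I H b ε J
  | n + 1, J =>
      (Tset I H b ε n J).filter fun k =>
        (2 : ℝ) ^ ((J : ℝ) * (b * H - 5 * ε)) ≤
          (((Tset I H b ε n (childScale b J)).filter fun k' =>
              dyadic (childScale b J) k' ⊆ dyadic J k).card : ℝ)

/-- `T_ℓ(J,b,ε)` for `ℓ ≥ 1`. -/
def T (I : Set ℝ) (H b ε : ℝ) (ℓ J : ℕ) : Finset ℕ := Tset I H b ε (ℓ - 1) J

/-- `U_ℓ(J,b,ε) = T_{ℓ-1}(J,b,ε) \ T_ℓ(J,b,ε)` for `ℓ ≥ 2`. -/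
def U (I : Set ℝ) (H b ε : ℝ) (ℓ J : ℕ) : Finset ℕ :=
  T I H b ε (ℓ - 1) J \ T I H b ε ℓ J

/-- `T_∞(J,b,ε) = ∩_{ℓ ≥ 1} T_ℓ(J,b,ε)`. -/
def Tinf (I : Set ℝ) (H b ε : ℝ) (J : ℕ) : Finset ℕ :=
  (Tset I H b ε 0 J).filter fun k => ∀ n, k ∈ Tset I H b ε n J

/-- `U_∞(J,b,ε) = ∪_{ℓ ≥ 2} U_ℓ(J,b,ε)`. -/
def Uinf (I : Set ℝ) (H b ε : ℝ) (J : ℕ) : Finset ℕ :=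
  (dyadicHit I J).filter fun k => ∃ ℓ, 2 ≤ ℓ ∧ k ∈ U I H b ε ℓ J

/-- The union `Ũ` of the dyadic intervals (at scale `j`) of a collection `U`. -/
def tilde (j : ℕ) (U : Finset ℕ) : Set ℝ := ⋃ k ∈ U, dyadic j k

/-- The integer scale `⌊(1+b)^ℓ J⌋`. -/
def rscale (b : ℝ) (J ℓ : ℕ) : ℕ := ⌊(1 + b) ^ ℓ * (J : ℝ)⌋₊

lemma exists_child (j j' k : ℕ) (hj : j ≤ j') (x : ℝ) (hx : x ∈ dyadic j k) (hk : k < 2 ^ j) :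
    ∃ k', k' < 2 ^ j' ∧ dyadic j' k' ⊆ dyadic j k ∧ x ∈ dyadic j' k' := by
  obtain ⟨d, rfl⟩ := Nat.exists_eq_add_of_le hj
  have p1 : (0:ℝ) < 2 ^ j := by positivity
  have p2 : (0:ℝ) < 2 ^ d := by positivity
  have p3 : (0:ℝ) < 2 ^ (j + d) := by positivity
  have hx' : (k:ℝ) ≤ x * 2 ^ j ∧ x * 2 ^ j ≤ k + 1 := by
    obtain ⟨h1, h2⟩ := hx
    exact ⟨(div_le_iff₀ p1).1 h1, (le_div_iff₀ p1).1 h2⟩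
  have sub : ∀ i : ℕ, i + 1 ≤ 2 ^ d →
      dyadic (j + d) (k * 2 ^ d + i) ⊆ dyadic j k ∧ k * 2 ^ d + i < 2 ^ (j + d) := by
    intro i hi
    constructor
    · have hi' : (i:ℝ) + 1 ≤ 2 ^ d := by exact_mod_cast hi
      apply Set.Icc_subset_Icc
      · rw [div_le_div_iff₀ p1 p3]; push_cast; rw [pow_add]
        nlinarith [mul_nonneg (Nat.cast_nonneg (α := ℝ) i) p1.le]
      · rw [div_le_div_iff₀ p3 p1]; push_cast; rw [pow_add]
        nlinarith [mul_le_mul_of_nonneg_right hi' p1.le]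
    · rw [pow_add]
      have : (k + 1) * 2 ^ d ≤ 2 ^ j * 2 ^ d := Nat.mul_le_mul_right _ hk
      nlinarith
  have mem : ∀ i : ℕ, (i:ℝ) ≤ (x * 2 ^ j - k) * 2 ^ d → (x * 2 ^ j - k) * 2 ^ d ≤ i + 1 →
      x ∈ dyadic (j + d) (k * 2 ^ d + i) := by
    intro i h1 h2
    constructor
    · rw [div_le_iff₀ p3]; push_cast; rw [pow_add]; linarith
    · rw [le_div_iff₀ p3]; push_cast; rw [pow_add]; linarith
  set y := (x * 2 ^ j - k) * 2 ^ d with hy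
  have y0 : 0 ≤ y := mul_nonneg (by linarith) p2.le
  have y1 : y ≤ 2 ^ d := by
    have : y ≤ 1 * 2 ^ d := mul_le_mul_of_nonneg_right (by linarith) p2.le
    linarith
  by_cases h : ⌊y⌋₊ + 1 ≤ 2 ^ d
  · obtain ⟨a, c⟩ := sub _ h
    exact ⟨_, c, a, mem _ (Nat.floor_le y0) (Nat.lt_floor_add_one y).le⟩
  · have h2 : 2 ^ d ≤ ⌊y⌋₊ := by omega
    have h3 : (2:ℝ) ^ d ≤ y := by
      calc (2:ℝ) ^ d = ((2 ^ d : ℕ) : ℝ) := by push_cast; rfl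
        _ ≤ ⌊y⌋₊ := by exact_mod_cast h2
        _ ≤ y := Nat.floor_le y0
    have h4 : 1 ≤ 2 ^ d := Nat.one_le_two_pow
    obtain ⟨a, c⟩ := sub (2 ^ d - 1) (by omega)
    refine ⟨_, c, a, mem _ ?_ ?_⟩ <;> push_cast [h4] <;> linarith

lemma exists_hit (I : Set ℝ) (hIsub : I ⊆ Set.Icc 0 1) (j : ℕ) (x : ℝ) (hx : x ∈ I) :
    ∃ k ∈ dyadicHit I j, x ∈ dyadic j k := by
  have h0 : x ∈ dyadic 0 0 := by simpa [dyadic] using hIsub hx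
  obtain ⟨k, h1, -, h3⟩ := exists_child 0 j 0 (Nat.zero_le _) x h0 (by simp)
  exact ⟨k, by simp only [dyadicHit, Finset.mem_filter, Finset.mem_range]; exact ⟨h1, x, h3, hx⟩, h3⟩

lemma exists_hit_child (I : Set ℝ) (j j' k : ℕ) (hj : j ≤ j') (x : ℝ) (hx : x ∈ I)
    (hk : k ∈ dyadicHit I j) (hxk : x ∈ dyadic j k) :
    ∃ k' ∈ dyadicHit I j', dyadic j' k' ⊆ dyadic j k ∧ x ∈ dyadic j' k' := by
  simp only [dyadicHit, Finset.mem_filter, Finset.mem_range] at hk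
  obtain ⟨k', h1, h2, h3⟩ := exists_child j j' k hj x hxk hk.1
  exact ⟨k', by simp only [dyadicHit, Finset.mem_filter, Finset.mem_range]; exact ⟨h1, x, h3, hx⟩,
    h2, h3⟩

lemma le_childScale (b : ℝ) (hb : 0 ≤ b) (j : ℕ) : j ≤ childScale b j := by
  apply Nat.le_floor
  nlinarith [Nat.cast_nonneg (α := ℝ) j]

/-- children of `k` in the `n`-th collection -/
def chl (I : Set ℝ) (H b ε : ℝ) (j k n : ℕ) : Finset ℕ :=
  (Tset I H b ε n (childScale b j)).filter fun k' => dyadic (childScale b j) k' ⊆ dyadic j k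

/-- the selected few children of the intervals of `ND` -/
def few (I : Set ℝ) (H b ε : ℝ) (j k : ℕ) : Finset ℕ :=
  if h : ∃ n, ((chl I H b ε j k n).card : ℝ) < (2 : ℝ) ^ ((j : ℝ) * (b * H - 5 * ε)) then
    chl I H b ε j k (Nat.find h) else ∅

def third (I : Set ℝ) (H b ε : ℝ) (j : ℕ) : Finset ℕ :=
  (ND I H b ε j).biUnion fun k => few I H b ε j k

lemma Tset_succ_subset (I : Set ℝ) (H b ε : ℝ) (n j : ℕ) :
    Tset I H b ε (n + 1) j ⊆ Tset I H b ε n j := by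
  rw [Tset]; exact Finset.filter_subset _ _

lemma Tset_anti (I : Set ℝ) (H b ε : ℝ) (j : ℕ) : Antitone fun n => Tset I H b ε n j :=
  antitone_nat_of_succ_le fun n => Tset_succ_subset I H b ε n j

lemma third_card (I : Set ℝ) (H b ε : ℝ) (j : ℕ) :
    ((third I H b ε j).card : ℝ) ≤
      (ND I H b ε j).card * (2 : ℝ) ^ ((j : ℝ) * (b * H - 5 * ε)) := by
  have h1 : ((third I H b ε j).card : ℝ) ≤ ∑ k ∈ ND I H b ε j, ((few I H b ε j k).card : ℝ) := by
    exact_mod_cast Finset.card_biUnion_le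
  refine h1.trans ?_
  rw [← nsmul_eq_mul]
  apply Finset.sum_le_card_nsmul
  intro k _
  unfold few
  split_ifs with h
  · exact (Nat.find_spec h).le
  · simp; positivity

/-- the exceptional points at scale `j` -/
def stuff (I : Set ℝ) (H b ε : ℝ) (j : ℕ) : Set ℝ :=
  tilde j (FD I H b ε j) ∪ (tilde (childScale b j) (CB I b j (SD I H b ε j)) ∪
    tilde (childScale b j) (third I H b ε j))

lemma mem_tilde {j k : ℕ} {U : Finset ℕ} {x : ℝ} (hk : k ∈ U) (hx : x ∈ dyadic j k) :
    x ∈ tilde j U := by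
  simp only [tilde, Set.mem_iUnion]; exact ⟨k, hk, hx⟩

lemma descent (I : Set ℝ) (H b ε : ℝ) (hb : 0 ≤ b) (x : ℝ) (hx : x ∈ I) (n : ℕ) :
    ∀ j k, k ∈ dyadicHit I j → x ∈ dyadic j k → k ∉ Tset I H b ε n j →
      ∃ j' ≥ j, x ∈ stuff I H b ε j' := by
  induction n with
  | zero =>
    intro j k hk hxk hT
    refine ⟨j, le_rfl, ?_⟩
    rw [Tset] at hT
    simp only [ND, Finset.mem_filter, not_and] at hT
    by_cases hF : k ∈ FD I H b ε j
    · exact Or.inl (mem_tilde hF hxk)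
    · right; left
      have hF' : ¬ _ := fun h => hF (Finset.mem_filter.2 ⟨hk, h⟩)
      have hS : k ∈ SD I H b ε j := by
        refine Finset.mem_filter.2 ⟨hk, ?_⟩
        by_contra hcon
        exact hT hk (not_le.1 hcon).le (not_le.1 hF').le
      obtain ⟨k', h1, h2, h3⟩ := exists_hit_child I j (childScale b j) k (le_childScale b hb j)
        x hx hk hxk
      exact mem_tilde (Finset.mem_filter.2 ⟨h1, k, hS, h2⟩) h3
  | succ n ih =>
    intro j k hk hxk hT
    by_cases hTn : k ∈ Tset I H b ε n j
    · have hlt : ((chl I H b ε j k n).card : ℝ) < (2 : ℝ) ^ ((j : ℝ) * (b * H - 5 * ε)) := by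
        by_contra hcon
        apply hT
        rw [Tset]
        exact Finset.mem_filter.2 ⟨hTn, not_lt.1 hcon⟩
      obtain ⟨k', h1, h2, h3⟩ := exists_hit_child I j (childScale b j) k (le_childScale b hb j)
        x hx hk hxk
      by_cases hk' : k' ∈ Tset I H b ε n (childScale b j)
      · refine ⟨j, le_rfl, Or.inr (Or.inr (mem_tilde ?_ h3))⟩
        refine Finset.mem_biUnion.2 ⟨k, Tset_anti I H b ε j (Nat.zero_le n) hTn, ?_⟩
        have hex : ∃ n, ((chl I H b ε j k n).card : ℝ) < (2 : ℝ) ^ ((j : ℝ) * (b * H - 5 * ε)) :=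
          ⟨n, hlt⟩
        rw [few, dif_pos hex]
        exact Finset.mem_filter.2 ⟨Tset_anti I H b ε _ (Nat.find_min' hex hlt) hk', h2⟩
      · obtain ⟨j', hj', hs⟩ := ih _ k' h1 h3 hk'
        exact ⟨j', (le_childScale b hb j).trans hj', hs⟩
    · exact ih j k hk hxk hTn

lemma diam_dyadic (j k : ℕ) : Metric.ediam (dyadic j k) = ENNReal.ofReal ((2:ℝ) ^ (-(j:ℝ))) := by
  rw [dyadic, Real.ediam_Icc]
  congr 1
  rw [Real.rpow_neg (by norm_num), Real.rpow_natCast]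
  field_simp; ring

lemma dimH_limsup (A : ℕ → Finset ℕ) (σ : ℕ → ℕ) (hσ : ∀ j, j ≤ σ j) (s C r : ℝ) (hs : 0 < s)
    (hC : 0 ≤ C) (hr0 : 0 ≤ r) (hr : r < 1) (J₀ : ℕ)
    (hA : ∀ j ≥ J₀, ((A j).card : ℝ) * (2:ℝ) ^ (-(σ j : ℝ) * s) ≤ C * r ^ j) :
    dimH {x | ∃ᶠ j in atTop, x ∈ tilde (σ j) (A j)} ≤ ENNReal.ofReal s := by
  set F := {x | ∃ᶠ j in atTop, x ∈ tilde (σ j) (A j)} with hF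
  have key : μH[s] F ≤ 0 := by
    have hsum : ∑' m : ℕ, ENNReal.ofReal (C * r ^ m) ≠ ⊤ := by
      have := (summable_geometric_of_lt_one hr0 hr).mul_left C
      rw [← ENNReal.ofReal_tsum_of_nonneg (fun m => by positivity) this]
      exact ENNReal.ofReal_ne_top
    have hlim := ENNReal.tendsto_sum_nat_add (fun m => ENNReal.ofReal (C * r ^ m)) hsum
    have hhalf : Tendsto (fun n : ℕ => ENNReal.ofReal ((2:ℝ) ^ (-(n:ℝ)))) atTop (nhds 0) := by
      rw [← ENNReal.ofReal_zero]
      apply ENNReal.tendsto_ofReal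
      have := tendsto_pow_atTop_nhds_zero_of_lt_one (r := (1/2:ℝ)) (by norm_num) (by norm_num)
      refine this.congr fun n => ?_
      rw [Real.rpow_neg (by norm_num), Real.rpow_natCast]; simp
    set t : ℕ → ℕ × ℕ → Set ℝ := fun n p =>
      if p.2 ∈ A (p.1 + n) then dyadic (σ (p.1 + n)) p.2 else ∅ with ht
    have h1 := Measure.hausdorffMeasure_le_liminf_tsum (ι := fun _ : ℕ => ℕ × ℕ) s F
      (l := atTop) (fun n : ℕ => ENNReal.ofReal ((2:ℝ) ^ (-(n:ℝ)))) hhalf t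
      (Eventually.of_forall (by
        intro n p
        simp only [ht]
        split_ifs
        · rw [diam_dyadic]
          apply ENNReal.ofReal_le_ofReal
          apply Real.rpow_le_rpow_of_exponent_le (by norm_num)
          have : n ≤ σ (p.1 + n) := (Nat.le_add_left _ _).trans (hσ _)
          have : (n:ℝ) ≤ σ (p.1 + n) := by exact_mod_cast this
          linarith
        · simp))
      (Eventually.of_forall (by
        intro n x hx
        obtain ⟨j, hj, hxj⟩ := (frequently_atTop.1 hx) n
        simp only [tilde, Set.mem_iUnion] at hxj
        obtain ⟨k, hk, hxk⟩ := hxj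
        refine Set.mem_iUnion.2 ⟨(j - n, k), ?_⟩
        simp only [ht, Nat.sub_add_cancel hj, hk, if_true]
        exact hxk))
    refine h1.trans ?_
    rw [← hlim.liminf_eq]
    refine liminf_le_liminf ?_
    filter_upwards [eventually_ge_atTop J₀] with n hn
    rw [ENNReal.tsum_prod (f := fun i k => Metric.ediam (t n (i, k)) ^ s)]
    apply ENNReal.tsum_le_tsum
    intro i
    rw [tsum_eq_sum (s := A (i + n))]
    · have hle : ∀ k ∈ A (i + n), Metric.ediam (t n (i, k)) ^ s =
          ENNReal.ofReal ((2:ℝ) ^ (-(σ (i+n) : ℝ) * s)) := by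
        intro k hk
        simp only [ht, hk, if_true, diam_dyadic]
        rw [ENNReal.ofReal_rpow_of_pos (by positivity), ← Real.rpow_mul (by norm_num)]
      rw [Finset.sum_congr rfl hle, Finset.sum_const, nsmul_eq_mul, ← ENNReal.ofReal_natCast,
        ← ENNReal.ofReal_mul (by positivity)]
      exact ENNReal.ofReal_le_ofReal (hA _ (by omega))
    · intro k hk
      simp only [ht, hk, if_false]
      simp [hs]
  have h0 : μH[((s.toNNReal : NNReal) : ℝ)] F ≠ ⊤ := by
    rw [Real.coe_toNNReal _ hs.le]
    exact (key.trans_lt ENNReal.zero_lt_top).ne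
  exact dimH_le_of_hausdorffMeasure_ne_top h0

lemma two_rpow_childScale (b s : ℝ) (hs : 0 < s) (j : ℕ) :
    (2:ℝ) ^ (-(childScale b j : ℝ) * s) ≤ (2:ℝ) ^ (s - (1 + b) * j * s) := by
  apply Real.rpow_le_rpow_of_exponent_le (by norm_num)
  have : (1 + b) * (j:ℝ) < childScale b j + 1 := Nat.lt_floor_add_one _
  nlinarith

lemma Tinf_zero (I : Set ℝ) (hIsub : I ⊆ Set.Icc 0 1) (hIne : I.Nonempty) (H b ε : ℝ) :
    0 ∈ Tinf I H b ε 0 := by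
  have hc : childScale b 0 = 0 := by simp [childScale]
  have hhit : dyadicHit I 0 = {0} := by
    obtain ⟨x, hx⟩ := hIne
    ext k
    simp only [dyadicHit, Finset.mem_filter, Finset.mem_range, pow_zero, Nat.lt_one_iff,
      Finset.mem_singleton, and_iff_left_iff_imp]
    rintro rfl
    exact ⟨x, by simpa [dyadic] using hIsub hx, hx⟩
  have hall : ∀ n, 0 ∈ Tset I H b ε n 0 := by
    intro n
    induction n with
    | zero =>
      rw [Tset]
      have : childrenIn I 0 0 0 = {0} := by
        rw [childrenIn, hhit, Finset.filter_singleton, if_pos subset_rfl]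
      simp [ND, hhit, hc, this]
    | succ n ih =>
      rw [Tset]
      refine Finset.mem_filter.2 ⟨ih, ?_⟩
      simp only [hc, Nat.cast_zero, zero_mul, Real.rpow_zero]
      have : 0 < (Finset.filter (fun k' => dyadic 0 k' ⊆ dyadic 0 0) (Tset I H b ε n 0)).card :=
        Finset.card_pos.2 ⟨0, Finset.mem_filter.2 ⟨ih, subset_rfl⟩⟩
      exact_mod_cast this
  exact Finset.mem_filter.2 ⟨hall 0, hall⟩

lemma tendsto_rscale (b : ℝ) (hb : 0 < b) (J : ℕ) (hJ : 0 < J) :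
    Tendsto (rscale b J) atTop atTop := by
  unfold rscale
  apply tendsto_nat_floor_atTop.comp
  apply Tendsto.atTop_mul_const (by exact_mod_cast hJ)
  exact tendsto_pow_atTop_atTop_of_one_lt (by linarith)

/-- there is `ℓ₀` such that the intersection of the unions of the intervals
of `T_∞((1+b)^ℓ J,b,ε)`, `ℓ ≥ ℓ₀`, intersected with `I`, has Hausdorff dimension `≥ H - ε`. -/
theorem dimH_inter_Tinf_ge
    (I : Set ℝ) (H : ℝ) (hIc : IsCompact I) (hIsub : I ⊆ Set.Icc 0 1) (hIne : I.Nonempty)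
    (hHpos : 0 < H) (hdim : dimH I = ENNReal.ofReal H) (hbox : upperBoxDim I = H)
    (b ε : ℝ) (hb : b ∈ Set.Ioo (0 : ℝ) 1) (hε : 0 < ε) (hbH : 0 < b * H - 5 * ε)
    (J₀ : ℕ)
    (hJ₀ : ∀ j ≥ J₀,
      ((2 : ℝ) ^ ((j : ℝ) * (H - 2 * ε)) ≤ ((ND I H b ε j).card : ℝ) ∧
        ((ND I H b ε j).card : ℝ) ≤ (2 : ℝ) ^ ((j : ℝ) * (H + ε))) ∧
      ((FD I H b ε j).card : ℝ) ≤ (2 : ℝ) ^ ((j : ℝ) * (H - 2 * ε)) ∧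
      ((CB I b j (SD I H b ε j)).card : ℝ) ≤ (2 : ℝ) ^ ((j : ℝ) * (1 + b) * (H - 3 * ε)))
    (J : ℕ) (hJ : J₀ ≤ J) :
    ∃ ℓ₀ : ℕ,
      ENNReal.ofReal (H - ε) ≤
        dimH ((⋂ ℓ : ℕ, ⋂ (_ : ℓ₀ ≤ ℓ),
          tilde (rscale b J ℓ) (Tinf I H b ε (rscale b J ℓ))) ∩ I) := by
  obtain ⟨hb0, hb1⟩ := hb
  have hHε : 0 < H - ε := by nlinarith
  rcases Nat.eq_zero_or_pos J with rfl | hJpos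
  · refine ⟨0, ?_⟩
    have hsub : I ⊆ (⋂ ℓ : ℕ, ⋂ (_ : 0 ≤ ℓ),
          tilde (rscale b 0 ℓ) (Tinf I H b ε (rscale b 0 ℓ))) ∩ I := by
      intro x hx
      refine ⟨?_, hx⟩
      simp only [Set.mem_iInter]
      intro ℓ _
      have : rscale b 0 ℓ = 0 := by simp [rscale]
      rw [this]
      exact mem_tilde (Tinf_zero I hIsub hIne H b ε) (by simpa [dyadic] using hIsub hx)
    refine le_trans ?_ (dimH_mono hsub)
    rw [hdim]
    exact ENNReal.ofReal_le_ofReal (by linarith)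
  by_contra hcon
  push Not at hcon
  set E : ℕ → Set ℝ := fun ℓ₀ => (⋂ ℓ : ℕ, ⋂ (_ : ℓ₀ ≤ ℓ),
          tilde (rscale b J ℓ) (Tinf I H b ε (rscale b J ℓ))) ∩ I with hE
  set F1 := {x | ∃ᶠ j in atTop, x ∈ tilde j (FD I H b ε j)} with hF1
  set F2 := {x | ∃ᶠ j in atTop, x ∈ tilde (childScale b j) (CB I b j (SD I H b ε j))} with hF2
  set F3 := {x | ∃ᶠ j in atTop, x ∈ tilde (childScale b j) (third I H b ε j)} with hF3
  have hcover : I ⊆ (⋃ ℓ₀, E ℓ₀) ∪ (F1 ∪ (F2 ∪ F3)) := by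
    intro x hx
    by_cases hxE : x ∈ ⋃ ℓ₀, E ℓ₀
    · exact Or.inl hxE
    right
    have hst : ∃ᶠ j in atTop, x ∈ stuff I H b ε j := by
      rw [frequently_atTop]
      intro M
      obtain ⟨ℓ₀, hℓ₀⟩ := eventually_atTop.1
        ((tendsto_rscale b hb0 J hJpos).eventually (eventually_ge_atTop M))
      have hn : x ∉ E ℓ₀ := fun h => hxE (Set.mem_iUnion.2 ⟨_, h⟩)
      have hn2 : ∃ ℓ, ℓ₀ ≤ ℓ ∧ x ∉ tilde (rscale b J ℓ) (Tinf I H b ε (rscale b J ℓ)) := by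
        by_contra hc
        push Not at hc
        exact hn ⟨by simpa only [Set.mem_iInter] using hc, hx⟩
      obtain ⟨ℓ, hℓ, hxt⟩ := hn2
      obtain ⟨k, hk, hxk⟩ := exists_hit I hIsub (rscale b J ℓ) x hx
      have hkT : k ∉ Tinf I H b ε (rscale b J ℓ) := fun h => hxt (mem_tilde h hxk)
      have hn3 : ∃ n, k ∉ Tset I H b ε n (rscale b J ℓ) := by
        by_contra hc
        push Not at hc
        exact hkT (Finset.mem_filter.2 ⟨hc 0, hc⟩)
      obtain ⟨n, hn⟩ := hn3
      obtain ⟨j', hj', hs⟩ := descent I H b ε hb0.le x hx n _ k hk hxk hn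
      exact ⟨j', (hℓ₀ ℓ hℓ).trans hj', hs⟩
    unfold stuff at hst
    simp only [Set.mem_union, frequently_or_distrib] at hst
    exact hst
  have hr1 : (2:ℝ) ^ (-ε) < 1 := Real.rpow_lt_one_of_one_lt_of_neg (by norm_num) (by linarith)
  have hrj : ∀ j : ℕ, ((2:ℝ) ^ (-ε)) ^ j = (2:ℝ) ^ (-ε * j) := fun j => by
    rw [Real.rpow_mul (by norm_num), Real.rpow_natCast]
  have d1 : dimH F1 ≤ ENNReal.ofReal (H - ε) := by
    refine dimH_limsup _ (fun j => j) (fun j => le_rfl) (H - ε) ((2:ℝ) ^ (H - ε)) ((2:ℝ) ^ (-ε)) hHε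
      (by positivity) (by positivity) hr1 J₀ ?_
    intro j hj
    obtain ⟨-, h, -⟩ := hJ₀ j hj
    refine (mul_le_mul_of_nonneg_right h (by positivity)).trans ?_
    rw [hrj, ← Real.rpow_add (by norm_num), ← Real.rpow_add (by norm_num)]
    apply Real.rpow_le_rpow_of_exponent_le (by norm_num)
    nlinarith
  have d2 : dimH F2 ≤ ENNReal.ofReal (H - ε) := by
    refine dimH_limsup _ (childScale b) (le_childScale b hb0.le) (H - ε) ((2:ℝ) ^ (H - ε))
      ((2:ℝ) ^ (-ε)) hHε (by positivity) (by positivity) hr1 J₀ ?_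
    intro j hj
    obtain ⟨-, -, h⟩ := hJ₀ j hj
    refine (mul_le_mul h (two_rpow_childScale b _ hHε j) (by positivity) (by positivity)).trans ?_
    rw [hrj, ← Real.rpow_add (by norm_num), ← Real.rpow_add (by norm_num)]
    apply Real.rpow_le_rpow_of_exponent_le (by norm_num)
    have := mul_nonneg (Nat.cast_nonneg (α := ℝ) j) hε.le
    nlinarith [mul_nonneg this hb0.le]
  have d3 : dimH F3 ≤ ENNReal.ofReal (H - ε) := by
    refine dimH_limsup _ (childScale b) (le_childScale b hb0.le) (H - ε) ((2:ℝ) ^ (H - ε))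
      ((2:ℝ) ^ (-ε)) hHε (by positivity) (by positivity) hr1 J₀ ?_
    intro j hj
    obtain ⟨⟨-, h⟩, -, -⟩ := hJ₀ j hj
    have h' := (third_card I H b ε j).trans (mul_le_mul_of_nonneg_right h (by positivity))
    refine (mul_le_mul h' (two_rpow_childScale b _ hHε j) (by positivity) (by positivity)).trans ?_
    rw [hrj, ← Real.rpow_add (by norm_num), ← Real.rpow_add (by norm_num),
      ← Real.rpow_add (by norm_num)]
    apply Real.rpow_le_rpow_of_exponent_le (by norm_num)
    have := mul_nonneg (Nat.cast_nonneg (α := ℝ) j) hε.le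
    nlinarith [mul_nonneg this (sub_nonneg.2 hb1.le)]
  have hfin : dimH I ≤ ENNReal.ofReal (H - ε) := by
    refine (dimH_mono hcover).trans ?_
    rw [dimH_union, dimH_union, dimH_union, dimH_iUnion]
    exact max_le (iSup_le fun i => (hcon i).le) (max_le d1 (max_le d2 d3))
  rw [hdim, ENNReal.ofReal_le_ofReal_iff hHε.le] at hfin
  linarith
end
end

section
/- Assume J ≥ J_0. Then dim_H( ∪_{ℓ_0 ≥ 1} ∩_{ℓ ≥ ℓ_0} T̃_∞((1+b)^ℓ J, b, ε) ∩ I ) = H, where dim_H denotes Hausdorff dimension. -/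
open scoped Classical ENNReal
open Set Filter MeasureTheory ProbabilityTheory

noncomputable section

lemma aux_child {I : Set ℝ} {j j' k : ℕ} (hjj : j ≤ j') (hk : k < 2 ^ j) {x : ℝ} (hxI : x ∈ I)
    (hx : x ∈ dyadic j k) :
    ∃ k' ∈ dyadicHit I j', x ∈ dyadic j' k' ∧ dyadic j' k' ⊆ dyadic j k := by
  obtain ⟨d, rfl⟩ := Nat.exists_eq_add_of_le hjj
  obtain ⟨h1, h2⟩ := hx
  have hj : (0 : ℝ) < 2 ^ j := by positivity
  have hd : (0 : ℝ) < 2 ^ d := by positivity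
  have hjd : (0 : ℝ) < 2 ^ (j + d) := by positivity
  have e : (2 : ℝ) ^ (j + d) = 2 ^ j * 2 ^ d := pow_add _ _ _
  rw [div_le_iff₀ hj] at h1
  rw [le_div_iff₀ hj] at h2
  have hx0 : 0 ≤ x := by
    by_contra h
    push Not at h
    have : x * 2 ^ j < 0 := mul_neg_of_neg_of_pos h hj
    have : (0 : ℝ) ≤ k := Nat.cast_nonneg k
    linarith
  have key : ∃ k' : ℕ, k * 2 ^ d ≤ k' ∧ k' + 1 ≤ (k + 1) * 2 ^ d ∧
      (k' : ℝ) ≤ x * 2 ^ (j + d) ∧ x * 2 ^ (j + d) ≤ k' + 1 := by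
    by_cases hlt : x * 2 ^ j < k + 1
    · refine ⟨⌊x * 2 ^ (j + d)⌋₊, ?_, ?_, Nat.floor_le (by positivity), (Nat.lt_floor_add_one _).le⟩
      · apply Nat.le_floor
        push_cast
        rw [e]
        nlinarith
      · apply Nat.succ_le_of_lt
        rw [Nat.floor_lt (by positivity)]
        push_cast
        rw [e]
        nlinarith
    · have heq : x * 2 ^ j = k + 1 := le_antisymm h2 (not_lt.mp hlt)
      have hp : 1 ≤ (k + 1) * 2 ^ d := Nat.mul_pos (Nat.succ_pos _) (by positivity)
      have hp2 : 1 ≤ 2 ^ d := Nat.one_le_two_pow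
      have c : (((k + 1) * 2 ^ d - 1 : ℕ) : ℝ) = (k + 1) * 2 ^ d - 1 := by
        rw [Nat.cast_sub hp]; push_cast; ring
      have hh : x * 2 ^ (j + d) = (k + 1) * 2 ^ d := by rw [e, ← heq]; ring
      refine ⟨(k + 1) * 2 ^ d - 1, ?_, ?_, ?_, ?_⟩
      · have : (k + 1) * 2 ^ d = k * 2 ^ d + 2 ^ d := by ring
        omega
      · omega
      · rw [c, hh]; linarith
      · rw [c, hh]; linarith
  obtain ⟨k', a1, a2, a3, a4⟩ := key
  have hxm : x ∈ dyadic (j + d) k' := by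
    constructor
    · rw [div_le_iff₀ hjd]; exact a3
    · rw [le_div_iff₀ hjd]; exact a4
  refine ⟨k', ?_, hxm, ?_⟩
  · unfold dyadicHit
    rw [Finset.mem_filter, Finset.mem_range]
    refine ⟨?_, x, hxm, hxI⟩
    have : (k + 1) * 2 ^ d ≤ 2 ^ j * 2 ^ d := Nat.mul_le_mul_right _ hk
    rw [pow_add]
    omega
  · have b1 : (k : ℝ) * 2 ^ d ≤ k' := by exact_mod_cast a1
    have b2 : (k' : ℝ) + 1 ≤ (k + 1) * 2 ^ d := by exact_mod_cast a2
    apply Set.Icc_subset_Icc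
    · rw [div_le_div_iff₀ hj hjd, e]; nlinarith
    · rw [div_le_div_iff₀ hjd hj, e]; nlinarith

lemma aux_hit {I : Set ℝ} (hI : I ⊆ Set.Icc 0 1) (j : ℕ) {x : ℝ} (hxI : x ∈ I) :
    ∃ k ∈ dyadicHit I j, x ∈ dyadic j k := by
  obtain ⟨k, h1, h2, _⟩ := aux_child (I := I) (j := 0) (j' := j) (k := 0) (Nat.zero_le _)
    (by norm_num) hxI (by simpa [dyadic] using hI hxI)
  exact ⟨k, h1, h2⟩

lemma aux_le_child {b : ℝ} (hb : 0 < b) (j : ℕ) : j ≤ childScale b j := by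
  unfold childScale
  apply Nat.le_floor
  have : (0 : ℝ) ≤ j := Nat.cast_nonneg j
  nlinarith

lemma aux_child_lower (b : ℝ) (j : ℕ) : (1 + b) * (j : ℝ) - 1 ≤ (childScale b j : ℝ) := by
  have := Nat.lt_floor_add_one ((1 + b) * (j : ℝ))
  unfold childScale
  linarith

lemma aux_Tset_anti (I : Set ℝ) (H b ε : ℝ) (j : ℕ) :
    Antitone (fun n => Tset I H b ε n j) := by
  apply antitone_nat_of_succ_le
  intro n
  simp only [Tset]
  exact Finset.filter_subset _ _

/-- The surviving children of the intervals of `U_∞(j)`. -/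
def Few (I : Set ℝ) (H b ε : ℝ) (j : ℕ) : Finset ℕ :=
  (ND I H b ε j).biUnion fun k =>
    (dyadicHit I (childScale b j)).filter fun k' =>
      ∃ n, k ∈ Tset I H b ε n j ∧ k ∉ Tset I H b ε (n + 1) j ∧
        k' ∈ Tset I H b ε n (childScale b j) ∧ dyadic (childScale b j) k' ⊆ dyadic j k

lemma aux_few_card (I : Set ℝ) (H b ε : ℝ) (j : ℕ) :
    ((Few I H b ε j).card : ℝ) ≤
      ((ND I H b ε j).card : ℝ) * (2 : ℝ) ^ ((j : ℝ) * (b * H - 5 * ε)) := by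
  have h1 := Finset.card_biUnion_le (s := ND I H b ε j) (t := fun k =>
    (dyadicHit I (childScale b j)).filter fun k' =>
      ∃ n, k ∈ Tset I H b ε n j ∧ k ∉ Tset I H b ε (n + 1) j ∧
        k' ∈ Tset I H b ε n (childScale b j) ∧ dyadic (childScale b j) k' ⊆ dyadic j k)
  have h2 : ((Few I H b ε j).card : ℝ) ≤ ∑ k ∈ ND I H b ε j,
      ((((dyadicHit I (childScale b j)).filter fun k' =>
      ∃ n, k ∈ Tset I H b ε n j ∧ k ∉ Tset I H b ε (n + 1) j ∧
        k' ∈ Tset I H b ε n (childScale b j) ∧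
          dyadic (childScale b j) k' ⊆ dyadic j k).card : ℕ) : ℝ) := by
    exact_mod_cast h1
  refine h2.trans ?_
  rw [← nsmul_eq_mul]
  apply Finset.sum_le_card_nsmul
  intro k hk
  by_cases hn : ∃ n, k ∈ Tset I H b ε n j ∧ k ∉ Tset I H b ε (n + 1) j
  · obtain ⟨n, hn1, hn2⟩ := hn
    have hcard : (((Tset I H b ε n (childScale b j)).filter fun k' =>
              dyadic (childScale b j) k' ⊆ dyadic j k).card : ℝ) <
        (2 : ℝ) ^ ((j : ℝ) * (b * H - 5 * ε)) := by
      by_contra hcon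
      apply hn2
      simp only [Tset]
      rw [Finset.mem_filter]
      exact ⟨hn1, not_lt.mp hcon⟩
    refine le_trans ?_ hcard.le
    apply Nat.cast_le.mpr
    apply Finset.card_le_card
    intro k' hk'
    rw [Finset.mem_filter] at hk' ⊢
    obtain ⟨_, m, hm1, hm2, hm3, hm4⟩ := hk'
    have : m = n := by
      apply le_antisymm
      · by_contra h
        exact hn2 (aux_Tset_anti I H b ε j (by omega : n + 1 ≤ m) hm1)
      · by_contra h
        exact hm2 (aux_Tset_anti I H b ε j (by omega : m + 1 ≤ n) hn1)
    subst this
    exact ⟨hm3, hm4⟩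
  · rw [Finset.filter_false_of_mem]
    · simp only [Finset.card_empty, Nat.cast_zero]
      positivity
    · rintro k' _ ⟨n, a, c, _⟩
      exact hn ⟨n, a, c⟩

/-- The bad set at scale `j`. -/
def Bad (I : Set ℝ) (H b ε : ℝ) (j : ℕ) : Set ℝ :=
  tilde j (FD I H b ε j) ∪ (tilde (childScale b j) (CB I b j (SD I H b ε j)) ∪
    tilde (childScale b j) (Few I H b ε j))

lemma aux_bad {I : Set ℝ} {H b ε : ℝ} (hb : 0 < b) {x : ℝ} (hxI : x ∈ I) (n : ℕ) :
    ∀ j k, k ∈ dyadicHit I j → x ∈ dyadic j k → k ∉ Tset I H b ε n j →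
      ∃ j' ≥ j, x ∈ Bad I H b ε j' := by
  induction n with
  | zero =>
    intro j k hk hx hT
    refine ⟨j, le_rfl, ?_⟩
    have hk2 : k < 2 ^ j := by
      have := (Finset.mem_filter.mp hk).1
      simpa using this
    by_cases hF : k ∈ FD I H b ε j
    · left
      simp only [tilde, Set.mem_iUnion]
      exact ⟨k, hF, hx⟩
    · right; left
      have hS : k ∈ SD I H b ε j := by
        simp only [Tset, ND, FD, SD, Finset.mem_filter, not_and, not_le] at hT hF ⊢
        refine ⟨hk, ?_⟩
        by_contra h
        push Not at h
        have := hT hk h.le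
        have := hF hk
        linarith
      obtain ⟨k', h1, h2, h3⟩ := aux_child (aux_le_child hb j) hk2 hxI hx
      simp only [tilde, Set.mem_iUnion]
      refine ⟨k', ?_, h2⟩
      unfold CB
      rw [Finset.mem_filter]
      exact ⟨h1, k, hS, h3⟩
  | succ n ih =>
    intro j k hk hx hT
    have hk2 : k < 2 ^ j := by
      have := (Finset.mem_filter.mp hk).1
      simpa using this
    by_cases hTn : k ∈ Tset I H b ε n j
    · obtain ⟨k', h1, h2, h3⟩ := aux_child (aux_le_child hb j) hk2 hxI hx
      by_cases hT' : k' ∈ Tset I H b ε n (childScale b j)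
      · refine ⟨j, le_rfl, Or.inr (Or.inr ?_)⟩
        simp only [tilde, Set.mem_iUnion]
        refine ⟨k', ?_, h2⟩
        unfold Few
        rw [Finset.mem_biUnion]
        refine ⟨k, aux_Tset_anti I H b ε j (Nat.zero_le n) hTn, ?_⟩
        rw [Finset.mem_filter]
        exact ⟨h1, n, hTn, hT, hT', h3⟩
      · obtain ⟨j', a, c⟩ := ih _ k' h1 h2 hT'
        exact ⟨j', (aux_le_child hb j).trans a, c⟩
    · exact ih j k hk hx hTn

lemma aux_ediam (j k : ℕ) : Metric.ediam (dyadic j k) = ENNReal.ofReal ((2 : ℝ) ^ (-(j : ℝ))) := by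
  unfold dyadic
  rw [Real.ediam_Icc]
  congr 1
  rw [Real.rpow_neg (by norm_num), Real.rpow_natCast]
  field_simp
  ring

lemma aux_BC (E : Set ℝ) (s δ C : ℝ) (hs : 0 < s) (hδ : 0 < δ) (hC : 0 ≤ C) (F : ℕ → Finset (ℕ × ℕ))
    (N₀ : ℕ)
    (hF1 : ∀ j, ∀ p ∈ F j, j ≤ p.1)
    (hF2 : ∀ j ≥ N₀, ∑ p ∈ F j, (2 : ℝ) ^ (-(p.1 : ℝ) * s) ≤ C * (2 : ℝ) ^ (-(j : ℝ) * δ))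
    (hE : ∀ x ∈ E, ∀ N, ∃ j ≥ N, ∃ p ∈ F j, x ∈ dyadic p.1 p.2) :
    dimH E ≤ ENNReal.ofReal s := by
  have hsum : Summable (fun j : ℕ => C * (2 : ℝ) ^ (-(j : ℝ) * δ)) := by
    apply Summable.mul_left
    have h : Summable (fun j : ℕ => ((2 : ℝ) ^ (-δ)) ^ j) := by
      apply summable_geometric_of_lt_one (by positivity)
      exact Real.rpow_lt_one_of_one_lt_of_neg (by norm_num) (by linarith)
    refine h.congr ?_
    intro j
    rw [← Real.rpow_natCast, ← Real.rpow_mul (by norm_num)]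
    congr 1
    ring
  have hm : μH[s] E ≤ ENNReal.ofReal (∑' j : ℕ, C * (2 : ℝ) ^ (-(j : ℝ) * δ)) := by
    have h := Measure.hausdorffMeasure_le_liminf_tsum (X := ℝ) (β := ℕ)
      (ι := fun N => Σ j : ℕ, (F (j + N + N₀))) s E (l := atTop)
      (fun N => ENNReal.ofReal ((2 : ℝ)⁻¹ ^ N)) ?_
      (fun N p => dyadic p.2.1.1 p.2.1.2) ?_ ?_
    · refine h.trans ?_
      refine (Filter.liminf_le_liminf (v := fun _ => ENNReal.ofReal
        (∑' j : ℕ, C * (2 : ℝ) ^ (-(j : ℝ) * δ))) (Filter.Eventually.of_forall ?_)).trans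
        (by rw [Filter.liminf_const])
      intro N
      show (∑' p : (Σ j : ℕ, (F (j + N + N₀))), Metric.ediam (dyadic p.2.1.1 p.2.1.2) ^ s) ≤ _
      rw [ENNReal.tsum_sigma']
      rw [ENNReal.ofReal_tsum_of_nonneg (fun j => by positivity) hsum]
      apply ENNReal.tsum_le_tsum
      intro j
      have e1 : (∑' p : (F (j + N + N₀)), Metric.ediam (dyadic p.1.1 p.1.2) ^ s) =
          ∑ p ∈ F (j + N + N₀), ENNReal.ofReal ((2 : ℝ) ^ (-(p.1 : ℝ) * s)) := by
        rw [← Finset.tsum_subtype]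
        apply tsum_congr
        intro p
        rw [aux_ediam, ENNReal.ofReal_rpow_of_pos (by positivity), ← Real.rpow_mul (by norm_num)]
      refine e1.le.trans ?_
      rw [← ENNReal.ofReal_sum_of_nonneg (fun p _ => by positivity)]
      apply ENNReal.ofReal_le_ofReal
      refine (hF2 _ (by omega)).trans ?_
      apply mul_le_mul_of_nonneg_left _ hC
      apply Real.rpow_le_rpow_of_exponent_le (by norm_num)
      push_cast
      have a1 : (0 : ℝ) ≤ N := Nat.cast_nonneg _
      have a2 : (0 : ℝ) ≤ N₀ := Nat.cast_nonneg _
      nlinarith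
    · rw [← ENNReal.ofReal_zero]
      apply ENNReal.tendsto_ofReal
      exact tendsto_pow_atTop_nhds_zero_of_lt_one (by norm_num) (by norm_num)
    · refine Filter.Eventually.of_forall ?_
      rintro N ⟨j, p, hp⟩
      rw [aux_ediam]
      apply ENNReal.ofReal_le_ofReal
      rw [Real.rpow_neg (by norm_num), Real.rpow_natCast, ← inv_pow]
      have := hF1 _ p hp
      exact pow_le_pow_of_le_one (by norm_num) (by norm_num) (by show N ≤ p.1; omega)
    · refine Filter.Eventually.of_forall ?_
      intro N x hx
      obtain ⟨j, hj, p, hp, hxp⟩ := hE x hx (N + N₀)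
      obtain ⟨d, rfl⟩ := Nat.exists_eq_add_of_le hj
      rw [Set.mem_iUnion]
      have e : N + N₀ + d = d + N + N₀ := by ring
      exact ⟨⟨d, ⟨p, e ▸ hp⟩⟩, hxp⟩
  have : ((Real.toNNReal s : NNReal) : ℝ) = s := Real.coe_toNNReal s hs.le
  have h2 := dimH_le_of_hausdorffMeasure_ne_top (s := E) (d := Real.toNNReal s) (by
    rw [this]
    exact ne_top_of_le_ne_top ENNReal.ofReal_ne_top hm)
  exact h2

/-- Indices (scale, position) of a cover of the bad set. -/
def BadF (I : Set ℝ) (H b ε : ℝ) (j : ℕ) : Finset (ℕ × ℕ) :=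
  (({j} : Finset ℕ) ×ˢ FD I H b ε j) ∪
    ((({childScale b j} : Finset ℕ) ×ˢ CB I b j (SD I H b ε j)) ∪
    (({childScale b j} : Finset ℕ) ×ˢ Few I H b ε j))

lemma aux_sum_prod (j : ℕ) (A : Finset ℕ) (s : ℝ) :
    ∑ p ∈ (({j} : Finset ℕ) ×ˢ A), (2 : ℝ) ^ (-(p.1 : ℝ) * s) =
      (A.card : ℝ) * (2 : ℝ) ^ (-(j : ℝ) * s) := by
  rw [Finset.sum_product]
  simp

lemma aux_sum_union (A B : Finset (ℕ × ℕ)) (f : ℕ × ℕ → ℝ) (hf : ∀ p, 0 ≤ f p) :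
    ∑ p ∈ A ∪ B, f p ≤ ∑ p ∈ A, f p + ∑ p ∈ B, f p := by
  rw [← Finset.sum_union_inter]
  have : 0 ≤ ∑ p ∈ A ∩ B, f p := Finset.sum_nonneg fun p _ => hf p
  linarith

lemma aux_card_bound {c u v : ℝ} {a w : ℝ} (hc : c ≤ (2 : ℝ) ^ u) (h : u + v ≤ a + w) :
    c * (2 : ℝ) ^ v ≤ (2 : ℝ) ^ a * (2 : ℝ) ^ w := by
  rw [← Real.rpow_add (by norm_num)]
  calc c * (2 : ℝ) ^ v ≤ (2 : ℝ) ^ u * (2 : ℝ) ^ v := by gcongr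
    _ = (2 : ℝ) ^ (u + v) := by rw [Real.rpow_add (by norm_num)]
    _ ≤ _ := Real.rpow_le_rpow_of_exponent_le (by norm_num) h

/-- the union over `ℓ₀ ≥ 1` of the intersections over `ℓ ≥ ℓ₀` of the unions
of the intervals of `T_∞((1+b)^ℓ J,b,ε)`, intersected with `I`, has Hausdorff dimension `H`. -/
theorem dimH_union_inter_Tinf
    (I : Set ℝ) (H : ℝ) (hIc : IsCompact I) (hIsub : I ⊆ Set.Icc 0 1) (hIne : I.Nonempty)
    (hHpos : 0 < H) (hdim : dimH I = ENNReal.ofReal H) (hbox : upperBoxDim I = H)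
    (b ε : ℝ) (hb : b ∈ Set.Ioo (0 : ℝ) 1) (hε : 0 < ε) (hbH : 0 < b * H - 5 * ε)
    (J₀ : ℕ)
    (hJ₀ : ∀ j ≥ J₀,
      ((2 : ℝ) ^ ((j : ℝ) * (H - 2 * ε)) ≤ ((ND I H b ε j).card : ℝ) ∧
        ((ND I H b ε j).card : ℝ) ≤ (2 : ℝ) ^ ((j : ℝ) * (H + ε))) ∧
      ((FD I H b ε j).card : ℝ) ≤ (2 : ℝ) ^ ((j : ℝ) * (H - 2 * ε)) ∧
      ((CB I b j (SD I H b ε j)).card : ℝ) ≤ (2 : ℝ) ^ ((j : ℝ) * (1 + b) * (H - 3 * ε)))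
    (J : ℕ) (hJ : J₀ ≤ J) :
    dimH ((⋃ ℓ₀ : ℕ, ⋃ (_ : 1 ≤ ℓ₀), ⋂ ℓ : ℕ, ⋂ (_ : ℓ₀ ≤ ℓ),
        tilde (rscale b J ℓ) (Tinf I H b ε (rscale b J ℓ))) ∩ I) =
      ENNReal.ofReal H := by
  obtain ⟨hb0, hb1⟩ := hb
  rcases Nat.eq_zero_or_pos J with hJz | hJpos
  · subst hJz
    have hT : ∀ n, (0 : ℕ) ∈ Tset I H b ε n 0 := by
      have hc : childScale b 0 = 0 := by simp [childScale]
      have hhit : (0 : ℕ) ∈ dyadicHit I 0 := by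
        obtain ⟨x, hx⟩ := hIne
        simp only [dyadicHit, Finset.mem_filter]
        exact ⟨by simp, x, by simpa [dyadic] using hIsub hx, hx⟩
      intro n
      induction n with
      | zero =>
        have h1 : childrenIn I 0 0 0 = {0} := by
          ext k
          simp only [childrenIn, Finset.mem_filter, Finset.mem_singleton]
          constructor
          · rintro ⟨h, _⟩
            have := (Finset.mem_filter.mp h).1
            simpa using this
          · rintro rfl
            exact ⟨hhit, subset_rfl⟩
        simp only [Tset, ND, Finset.mem_filter, hc, h1]
        exact ⟨hhit, by simp⟩
      | succ n ih =>
        simp only [Tset, Finset.mem_filter, hc]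
        refine ⟨ih, ?_⟩
        simp only [Nat.cast_zero, zero_mul, Real.rpow_zero]
        rw [Nat.one_le_cast, Nat.one_le_iff_ne_zero, ← Nat.pos_iff_ne_zero, Finset.card_pos]
        exact ⟨0, Finset.mem_filter.mpr ⟨ih, subset_rfl⟩⟩
    have hr : ∀ ℓ, rscale b 0 ℓ = 0 := by intro ℓ; simp [rscale]
    rw [Set.inter_eq_right.mpr, hdim]
    intro x hx
    simp only [Set.mem_iUnion, Set.mem_iInter, hr, tilde]
    refine ⟨1, le_rfl, fun ℓ _ => ⟨0, ?_, by simpa [dyadic] using hIsub hx⟩⟩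
    exact Finset.mem_filter.mpr ⟨hT 0, hT⟩
  set A := (⋃ ℓ₀ : ℕ, ⋃ (_ : 1 ≤ ℓ₀), ⋂ ℓ : ℕ, ⋂ (_ : ℓ₀ ≤ ℓ),
        tilde (rscale b J ℓ) (Tinf I H b ε (rscale b J ℓ))) with hA
  have hHε : 5 * ε < H := by nlinarith
  have hbad : ∀ x ∈ I \ A, ∀ N, ∃ j ≥ N, x ∈ Bad I H b ε j := by
    rintro x ⟨hxI, hxA⟩ N
    have htend : Tendsto (fun ℓ => rscale b J ℓ) atTop atTop := by
      apply tendsto_nat_floor_atTop.comp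
      apply Tendsto.atTop_mul_const (by exact_mod_cast hJpos)
      exact tendsto_pow_atTop_atTop_of_one_lt (by linarith)
    obtain ⟨M, hM⟩ := (Filter.eventually_atTop.mp (htend.eventually_ge_atTop N))
    have : ∃ ℓ ≥ M, x ∉ tilde (rscale b J ℓ) (Tinf I H b ε (rscale b J ℓ)) := by
      by_contra hcon
      push Not at hcon
      apply hxA
      rw [hA]
      simp only [Set.mem_iUnion, Set.mem_iInter]
      exact ⟨M + 1, by omega, fun ℓ hℓ => hcon ℓ (by omega)⟩
    obtain ⟨ℓ, hℓ, hxℓ⟩ := this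
    obtain ⟨k, hk, hxk⟩ := aux_hit hIsub (rscale b J ℓ) hxI
    have : ∃ n, k ∉ Tset I H b ε n (rscale b J ℓ) := by
      by_contra hcon
      push Not at hcon
      apply hxℓ
      simp only [tilde, Set.mem_iUnion]
      exact ⟨k, Finset.mem_filter.mpr ⟨hcon 0, hcon⟩, hxk⟩
    obtain ⟨n, hn⟩ := this
    obtain ⟨j', hj', hx'⟩ := aux_bad hb0 hxI n _ k hk hxk hn
    exact ⟨j', (hM ℓ hℓ).trans hj', hx'⟩
  have hdimE : dimH (I \ A) ≤ ENNReal.ofReal (H - ε) := by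
    apply aux_BC (I \ A) (H - ε) ε (3 * (2 : ℝ) ^ H) (by linarith) hε (by positivity)
      (BadF I H b ε) J₀
    · intro j p hp
      have := aux_le_child hb0 j
      simp only [BadF, Finset.mem_union, Finset.mem_product, Finset.mem_singleton] at hp
      omega
    · intro j hj
      obtain ⟨⟨_, hND⟩, hFD, hSD⟩ := hJ₀ j hj
      have hc := aux_child_lower b j
      have hj0 : (0 : ℝ) ≤ j := Nat.cast_nonneg j
      have hcs : ((1 + b) * (j : ℝ) - 1) * (H - ε) ≤ (childScale b j : ℝ) * (H - ε) :=
        mul_le_mul_of_nonneg_right hc (by linarith)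
      have hjε : 0 ≤ (j : ℝ) * ε := by positivity
      have hjεb : 0 ≤ (j : ℝ) * ε * b := by positivity
      have hjεb' : 0 ≤ (j : ℝ) * ε * (1 - b) := mul_nonneg hjε (by linarith)
      have hfew : ((Few I H b ε j).card : ℝ) ≤
          (2 : ℝ) ^ ((j : ℝ) * (H + ε) + (j : ℝ) * (b * H - 5 * ε)) := by
        rw [Real.rpow_add (by norm_num)]
        exact (aux_few_card I H b ε j).trans (mul_le_mul_of_nonneg_right hND (by positivity))
      have t1 := aux_card_bound (v := -(j : ℝ) * (H - ε)) (a := H) (w := -(j : ℝ) * ε) hFD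
        (by nlinarith)
      have t2 := aux_card_bound (v := -(childScale b j : ℝ) * (H - ε)) (a := H)
        (w := -(j : ℝ) * ε) hSD (by nlinarith)
      have t3 := aux_card_bound (v := -(childScale b j : ℝ) * (H - ε)) (a := H)
        (w := -(j : ℝ) * ε) hfew (by nlinarith)
      have hnn : ∀ p : ℕ × ℕ, 0 ≤ (2 : ℝ) ^ (-(p.1 : ℝ) * (H - ε)) := fun p => by positivity
      have u1 := aux_sum_union (({j} : Finset ℕ) ×ˢ FD I H b ε j)
        ((({childScale b j} : Finset ℕ) ×ˢ CB I b j (SD I H b ε j)) ∪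
          (({childScale b j} : Finset ℕ) ×ˢ Few I H b ε j)) _ hnn
      have u2 := aux_sum_union (({childScale b j} : Finset ℕ) ×ˢ CB I b j (SD I H b ε j))
          (({childScale b j} : Finset ℕ) ×ˢ Few I H b ε j) _ hnn
      rw [aux_sum_prod] at u1
      rw [aux_sum_prod, aux_sum_prod] at u2
      unfold BadF
      linarith
    · intro x hx N
      obtain ⟨j, hj, hxj⟩ := hbad x hx N
      refine ⟨j, hj, ?_⟩
      simp only [Bad, tilde, Set.mem_union, Set.mem_iUnion] at hxj
      rcases hxj with ⟨k, hk, hxk⟩ | ⟨k, hk, hxk⟩ | ⟨k, hk, hxk⟩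
      · exact ⟨(j, k), by simp [BadF, hk], hxk⟩
      · exact ⟨(childScale b j, k), by simp [BadF, hk], hxk⟩
      · exact ⟨(childScale b j, k), by simp [BadF, hk], hxk⟩
  have hlt : dimH (I \ A) < ENNReal.ofReal H :=
    hdimE.trans_lt ((ENNReal.ofReal_lt_ofReal_iff hHpos).mpr (by linarith))
  have hun : dimH I = max (dimH (A ∩ I)) (dimH (I \ A)) := by
    rw [← dimH_union]
    congr 1
    rw [Set.inter_comm]
    exact (Set.inter_union_diff I A).symm
  rw [hdim] at hun
  rcases max_choice (dimH (A ∩ I)) (dimH (I \ A)) with h | h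
  · rw [hun, h]
  · rw [h] at hun
    exact absurd hun hlt.ne'
end
end
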